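/- If a Sturmian shift X ⊆ {0,1}^ℤ is the generic limit set of some cellular automaton, then its language L(X) is Δ⁰₂, i.e., both Σ⁰₂ and Π⁰₂. -/

import Mathlib

open Filter Set Function

namespace Gls

variable {A : Type*}

/-- The left shift map on `A^ℤ`. -/
def shift (x : ℤ → A) : ℤ → A := fun i => x (i + 1)

/-- A cellular automaton: a continuous shift-commuting self-map of the full shift. -/
def IsCA [TopologicalSpace A] (f : (ℤ → A) → (ℤ → A)) : Prop :=
  Continuous f ∧ f ∘ shift = shift ∘ f

/-- The set of limit points of the forward orbit of `x` under `f`. -/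
def omegaSet [TopologicalSpace A] (f : (ℤ → A) → (ℤ → A)) (x : ℤ → A) : Set (ℤ → A) :=
  {y | MapClusterPt y atTop fun t => f^[t] x}

/-- The realm of attraction of `Y`. -/
def realm [TopologicalSpace A] (f : (ℤ → A) → (ℤ → A)) (Y : Set (ℤ → A)) : Set (ℤ → A) :=
  {x | omegaSet f x ⊆ Y}

/-- The generic limit set: the intersection of all closed sets whose realm is comeager. -/
def genLimitSet [TopologicalSpace A] (f : (ℤ → A) → (ℤ → A)) : Set (ℤ → A) :=
  ⋂₀ {C | IsClosed C ∧ realm f C ∈ residual (ℤ → A)}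

/-- The word `x_{[i, i+n)}` of length `n` read in the configuration `x` from position `i`. -/
def word (x : ℤ → A) (i : ℤ) (n : ℕ) : List A :=
  (List.range n).map fun k => x (i + k)

/-- The cylinder set `[w]_i`. -/
def cylinder (w : List A) (i : ℤ) : Set (ℤ → A) := {x | word x i w.length = w}

/-- The language of `X`: all finite words occurring in points of `X`. -/
def lang (X : Set (ℤ → A)) : Set (List A) :=
  {w | ∃ x ∈ X, ∃ i : ℤ, word x i w.length = w}


/-- The arithmetical hierarchy over `ℕ`: `NatSigma 0` is the class of computable
predicates, and a predicate is `NatSigma (n+1)` (i.e. `Σ⁰ₙ₊₁`) if it is of the form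
`{a | ∃ k, (a, k) ∈ R}` for a `Π⁰ₙ` relation `R` (i.e. a relation whose complement is `Σ⁰ₙ`). -/
def NatSigma : ℕ → (ℕ → Prop) → Prop
  | 0 => fun P => ComputablePred P
  | (n + 1) => fun P =>
      ∃ R : ℕ → Prop, NatSigma n (fun a => ¬ R a) ∧ ∀ a, P a ↔ ∃ k, R (Nat.pair a k)

/-- A set of words is `Σ⁰ₙ` if, identifying words with natural numbers via the canonical
computable encoding, it is a `Σ⁰ₙ` subset of `ℕ`. -/
def SigmaLang {A : Type*} [Primcodable A] (n : ℕ) (P : Set (List A)) : Prop :=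
  NatSigma n (fun m => ∃ w : List A, Encodable.encode w = m ∧ w ∈ P)

/-- A set of words is `Π⁰ₙ` if its complement is `Σ⁰ₙ`. -/
def PiLang {A : Type*} [Primcodable A] (n : ℕ) (P : Set (List A)) : Prop :=
  SigmaLang n {w | w ∉ P}


/-- Shift by an arbitrary integer. -/
def sh (a : ℤ) (x : ℤ → Fin 2) : ℤ → Fin 2 := fun i => x (i + a)

/-- Window of length `n` at position `a`. -/
def win (x : ℤ → Fin 2) (a : ℤ) (n : ℕ) : Fin n → Fin 2 := fun i => x (a + (i : ℕ))

lemma win_eq_iff (x y : ℤ → Fin 2) (a b : ℤ) (n : ℕ) :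
    win x a n = win y b n ↔ ∀ k : ℕ, k < n → x (a + k) = y (b + k) := by
  constructor
  · intro h k hk
    exact congrFun h ⟨k, hk⟩
  · intro h
    funext i
    exact h i i.2

/-- The words of length `n` as functions. -/
def WW (X : Set (ℤ → Fin 2)) (n : ℕ) : Set (Fin n → Fin 2) := {w | ∃ x ∈ X, ∃ a, win x a n = w}

structure Sturm (X : Set (ℤ → Fin 2)) : Prop where
  closed : IsClosed X
  inv : ∀ (a : ℤ) (x), x ∈ X → sh a x ∈ X
  card : ∀ n, (WW X n).ncard = n + 1

def Per (x : ℤ → Fin 2) : Prop := ∃ p : ℕ, 0 < p ∧ ∀ i, x (i - p) = x i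
def LEP (x : ℤ → Fin 2) : Prop := ∃ p : ℕ, 0 < p ∧ ∃ m : ℤ, ∀ i < m, x (i - p) = x i

lemma MH (x : ℤ → Fin 2) (D : Set ℤ) (hne : D.Nonempty) (hD : ∀ e ∈ D, e - 1 ∈ D) (n : ℕ)
    (hc : {w | ∃ e ∈ D, win x (e - n) n = w}.ncard ≤ n) :
    ∃ p : ℕ, 0 < p ∧ ∃ K : ℕ, ∀ e, (∀ j ≤ K, e + (j : ℤ) ∈ D) → ∀ i < e, x (i - p) = x i := by
  set S : (k : ℕ) → Set (Fin k → Fin 2) := fun k => {w | ∃ e ∈ D, win x (e - k) k = w} with hS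
  have hex : ∃ k, (S (k+1)).ncard ≤ (S k).ncard := by
    by_contra hcon
    push Not at hcon
    have : ∀ k, k + 1 ≤ (S k).ncard := by
      intro k
      induction k with
      | zero =>
        obtain ⟨e, he⟩ := hne
        have : (S 0).Nonempty := ⟨_, e, he, rfl⟩
        have := (Set.ncard_pos (Set.toFinite _)).2 this
        omega
      | succ k ih => have := hcon k; omega
    have := this n
    have h2 : (S n).ncard ≤ n := hc
    omega
  obtain ⟨k, hk⟩ := hex
  have htail : ∀ e : ℤ, Fin.tail (win x (e - (k+1 : ℕ)) (k+1)) = win x (e - k) k := by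
    intro e; funext i
    simp only [Fin.tail, win, Fin.val_succ]
    congr 1; push_cast; ring
  have hinj : Set.InjOn Fin.tail (S (k+1)) := by
    refine Set.injOn_of_ncard_image_eq ?_ (Set.toFinite _)
    have him : Fin.tail '' (S (k+1)) = S k := by
      ext w; constructor
      · rintro ⟨_, ⟨e, he, rfl⟩, rfl⟩
        exact ⟨e, he, (htail e).symm⟩
      · rintro ⟨e, he, rfl⟩
        exact ⟨_, ⟨e, he, rfl⟩, htail e⟩
    have h1 := Set.ncard_image_le (f := Fin.tail) (Set.toFinite (S (k+1)))
    rw [him] at *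
    omega
  have hstep : ∀ e ∈ D, ∀ e' ∈ D, win x (e - k) k = win x (e' - k) k →
      x (e - k - 1) = x (e' - k - 1) := by
    intro e he e' he' h
    have := hinj ⟨e, he, rfl⟩ ⟨e', he', rfl⟩ (by rw [htail, htail, h])
    have := congrFun this 0
    simp only [win, Fin.val_zero] at this
    convert this using 2 <;> push_cast <;> ring
  have hall : ∀ e ∈ D, ∀ e' ∈ D, win x (e - k) k = win x (e' - k) k → ∀ t : ℕ,
      e - t ∈ D ∧ e' - t ∈ D ∧ win x (e - t - k) k = win x (e' - t - k) k := by
    intro e he e' he' h t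
    induction t with
    | zero => simpa using ⟨he, he', h⟩
    | succ t ih =>
      obtain ⟨h1, h2, h3⟩ := ih
      have h4 := hstep _ h1 _ h2 h3
      refine ⟨by have := hD _ h1; push_cast; convert this using 1; ring,
        by have := hD _ h2; push_cast; convert this using 1; ring, ?_⟩
      rw [win_eq_iff] at h3 ⊢
      intro j hj
      rcases j with _ | j
      · convert h4 using 2 <;> push_cast <;> ring
      · have := h3 j (by omega)
        convert this using 2 <;> push_cast <;> ring
  have hall2 : ∀ e ∈ D, ∀ e' ∈ D, win x (e - k) k = win x (e' - k) k → ∀ i < e, x i = x (i + (e' - e)) := by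
    intro e he e' he' h i hi
    by_cases hik : i < e - k
    · obtain ⟨t, ht⟩ : ∃ t : ℕ, i = e - t - k - 1 := ⟨(e - k - 1 - i).toNat, by omega⟩
      obtain ⟨h1, h2, h3⟩ := hall e he e' he' h t
      have := hstep _ h1 _ h2 h3
      rw [ht, this]
      congr 1; ring
    · rw [win_eq_iff] at h
      have := h (i - (e - k)).toNat (by omega)
      convert this using 2 <;> omega
  set K := Fintype.card (Fin k → Fin 2) with hK
  refine ⟨K.factorial, Nat.factorial_pos _, K, ?_⟩
  intro e he i hi
  have hnot : ¬ Function.Injective (fun j : Fin (K+1) => win x (e + (j : ℕ) - k) k) := by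
    intro h
    have := Fintype.card_le_of_injective _ h
    simp at this
    simp [hK] at this
  rw [Function.not_injective_iff] at hnot
  obtain ⟨a, b, hab, hne'⟩ := hnot
  wlog hlt : a < b generalizing a b
  · exact this b a hab.symm hne'.symm (lt_of_le_of_ne (not_lt.1 hlt) hne'.symm)
  have hlt' : (a : ℕ) < b := hlt
  have key := hall2 _ (he a (by omega)) _ (he b (by omega)) hab
  set d : ℕ := (b : ℕ) - a with hd
  have hdpos : 0 < d := by omega
  have key' : ∀ i < e, x (i - d) = x i := by
    intro i hi
    have := key (i - d) (by omega)
    rw [this]; congr 1; omega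
  have hdvd : d ∣ K.factorial := Nat.dvd_factorial hdpos (by have := b.2; omega)
  obtain ⟨c, hcc⟩ := hdvd
  have : ∀ c : ℕ, x (i - (d * c : ℕ)) = x i := by
    intro c
    induction c with
    | zero => simp
    | succ c ih =>
      rw [← ih, ← key' (i - (d * c : ℕ)) (by have : (0:ℤ) ≤ ((d * c : ℕ) : ℤ) := by positivity
                                             omega)]
      congr 1; push_cast; ring
  rw [hcc]; exact this c

lemma ncard_lt_of_omit {X : Set (ℤ → Fin 2)} (h : Sturm X) (n : ℕ) (S : Set (Fin n → Fin 2))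
    (hS : S ⊆ WW X n) (s) (hs : s ∈ WW X n) (hs' : s ∉ S) : S.ncard ≤ n := by
  have := Set.ncard_lt_ncard (s := S) (t := WW X n) ⟨hS, fun h => hs' (h hs)⟩ (Set.toFinite _)
  rw [h.card] at this; omega

lemma per_of_omit {X : Set (ℤ → Fin 2)} (h : Sturm X) (n : ℕ) (s) (hs : s ∈ WW X n) (x) (hx : x ∈ X)
    (hom : ∀ a, win x a n ≠ s) : Per x := by
  obtain ⟨p, hp, K, hK⟩ := MH x Set.univ ⟨0, trivial⟩ (fun _ _ => trivial) n
    (ncard_lt_of_omit h n _ (by rintro _ ⟨e, _, rfl⟩; exact ⟨x, hx, _, rfl⟩) s hs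
      (by rintro ⟨e, _, he⟩; exact hom _ he))
  exact ⟨p, hp, fun i => hK (i+1) (fun _ _ => trivial) i (by omega)⟩

lemma lep_of_omit {X : Set (ℤ → Fin 2)} (h : Sturm X) (n : ℕ) (s) (hs : s ∈ WW X n) (x) (hx : x ∈ X)
    (hom : ∀ a : ℤ, a + n ≤ 0 → win x a n ≠ s) : LEP x := by
  obtain ⟨p, hp, K, hK⟩ := MH x (Set.Iic 0) ⟨0, by simp⟩ (fun e he => by simp only [Set.mem_Iic] at he ⊢; omega) n
    (ncard_lt_of_omit h n _ (by rintro _ ⟨e, _, rfl⟩; exact ⟨x, hx, _, rfl⟩) s hs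
      (by rintro ⟨e, he0, he⟩; exact hom (e - n) (by simp at he0 ⊢; omega) he))
  exact ⟨p, hp, -K, hK (-K) (fun j hj => by simp; omega)⟩

lemma rs_exists {X : Set (ℤ → Fin 2)} (h : Sturm X) (n : ℕ) : ∃ x ∈ X, ∃ y ∈ X,
    (∀ i : ℤ, -n ≤ i → i < 0 → x i = y i) ∧ x 0 ≠ y 0 := by
  have hni : ¬ Set.InjOn (fun w : Fin (n+1) → Fin 2 => Fin.init w) (WW X (n+1)) := by
    intro hinj
    have h1 := Set.InjOn.ncard_image hinj
    have h2 : (fun w : Fin (n+1) → Fin 2 => (Fin.init w : Fin n → Fin 2)) '' (WW X (n+1)) ⊆ WW X n := by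
      rintro _ ⟨_, ⟨x, hx, a, rfl⟩, rfl⟩
      exact ⟨x, hx, a, by funext i; simp [Fin.init, win]⟩
    have h3 := Set.ncard_le_ncard h2 (Set.toFinite _)
    rw [h.card] at *
    omega
  simp only [Set.InjOn, not_forall] at hni
  obtain ⟨_, ⟨x, hx, a, rfl⟩, _, ⟨y, hy, b, rfl⟩, he, hne⟩ := hni
  have he' : ∀ k : ℕ, k < n → x (a + k) = y (b + k) := by
    intro k hk
    exact congrFun he ⟨k, hk⟩
  refine ⟨sh (a + n) x, h.inv _ _ hx, sh (b + n) y, h.inv _ _ hy, ?_, ?_⟩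
  · intro i h1 h2
    have := he' (i + n).toNat (by omega)
    simp only [sh]
    convert this using 2 <;> omega
  · intro h0
    apply hne
    rw [win_eq_iff]
    intro k hk
    by_cases hkn : k < n
    · exact he' k hkn
    · have : k = n := by omega
      subst this
      simpa [sh] using h0

lemma rs_unique {X : Set (ℤ → Fin 2)} (h : Sturm X) (n : ℕ) (x y x' y') (hx : x ∈ X) (hy : y ∈ X)
    (hx' : x' ∈ X) (hy' : y' ∈ X) (a b a' b' : ℤ)
    (h1 : ∀ k : ℕ, k < n → x (a + k) = y (b + k)) (h2 : x (a + n) ≠ y (b + n))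
    (h1' : ∀ k : ℕ, k < n → x' (a' + k) = y' (b' + k)) (h2' : x' (a' + n) ≠ y' (b' + n)) :
    ∀ k : ℕ, k < n → x (a + k) = x' (a' + k) := by
  by_contra hcon
  have hcon' : win x a n ≠ win x' a' n := fun hh => hcon ((win_eq_iff _ _ _ _ _).1 hh)
  have hinit : ∀ (z : ℤ → Fin 2) c, (Fin.init (win z c (n+1)) : Fin n → Fin 2) = win z c n := by
    intro z c; funext i; simp [Fin.init, win]
  have e1 : win x a n = win y b n := (win_eq_iff _ _ _ _ _).2 h1
  have e1' : win x' a' n = win y' b' n := (win_eq_iff _ _ _ _ _).2 h1'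
  have ne : win x a (n+1) ≠ win y b (n+1) := fun hh => h2 ((win_eq_iff _ _ _ _ _).1 hh n (by omega))
  have ne' : win x' a' (n+1) ≠ win y' b' (n+1) :=
    fun hh => h2' ((win_eq_iff _ _ _ _ _).1 hh n (by omega))
  have ne2 : win x a (n+1) ≠ win x' a' (n+1) := fun hh => hcon' (by rw [← hinit, ← hinit, hh])
  have ne3 : win x' a' (n+1) ≠ win y b (n+1) := fun hh => hcon' (by rw [e1, ← hinit y, ← hh, hinit])
  have ne4 : win x a (n+1) ≠ win y' b' (n+1) := fun hh => hcon' (by rw [e1', ← hinit y', ← hh, hinit])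
  set S : Set (Fin (n+1) → Fin 2) := WW X (n+1) \ {win x a (n+1), win x' a' (n+1)} with hS
  have hsub : WW X n ⊆ (fun w : Fin (n+1) → Fin 2 => (Fin.init w : Fin n → Fin 2)) '' S := by
    rintro _ ⟨z, hz, c, rfl⟩
    by_cases c1 : win z c (n+1) = win x a (n+1)
    · refine ⟨win y b (n+1), ⟨⟨y, hy, b, rfl⟩, ?_⟩, ?_⟩
      · simp [ne.symm, ne3.symm]
      · simp only [hinit]; rw [← e1, ← hinit, ← c1, hinit]
    · by_cases c2 : win z c (n+1) = win x' a' (n+1)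
      · refine ⟨win y' b' (n+1), ⟨⟨y', hy', b', rfl⟩, ?_⟩, ?_⟩
        · simp [ne'.symm, ne4.symm]
        · simp only [hinit]; rw [← e1', ← hinit, ← c2, hinit]
      · exact ⟨win z c (n+1), ⟨⟨z, hz, c, rfl⟩, by simp [c1, c2]⟩, hinit _ _⟩
  have hle := Set.ncard_le_ncard hsub (Set.toFinite _)
  have hle2 := Set.ncard_image_le (f := fun w : Fin (n+1) → Fin 2 => (Fin.init w : Fin n → Fin 2))
    (Set.toFinite S)
  have hd := Set.ncard_sdiff_add_ncard_of_subset (s := {win x a (n+1), win x' a' (n+1)})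
    (t := WW X (n+1)) (by
      rintro _ (rfl | rfl)
      · exact ⟨x, hx, a, rfl⟩
      · exact ⟨x', hx', a', rfl⟩) (Set.toFinite _)
  rw [Set.ncard_pair ne2, h.card, ← hS] at hd
  rw [h.card] at hle
  omega

lemma isClosed_eqAt (i j : ℤ) : IsClosed {q : (ℤ → Fin 2) × (ℤ → Fin 2) | q.1 i = q.2 j} :=
  isClosed_eq (by fun_prop) (by fun_prop)

lemma isClosed_agree (S : Set ℤ) :
    IsClosed {q : (ℤ → Fin 2) × (ℤ → Fin 2) | ∀ i ∈ S, q.1 i = q.2 i} := by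
  simp only [Set.ofPred_forall]
  exact isClosed_iInter fun i => isClosed_iInter fun _ => isClosed_eqAt i i

lemma isClosed_ne {α : Type*} [TopologicalSpace α] (f g : α → Fin 2) (hf : Continuous f) (hg : Continuous g) :
    IsClosed {q | f q ≠ g q} := by
  have : IsOpen {q | f q = g q} := by
    have h : {q | f q = g q} = ⋃ c : Fin 2, (f ⁻¹' {c} ∩ g ⁻¹' {c}) := by
      ext q; simp [eq_comm]
    rw [h]
    exact isOpen_iUnion fun c => ((isOpen_discrete _).preimage hf).inter ((isOpen_discrete _).preimage hg)
  exact this.isClosed_compl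

lemma limit_pair (P : ℕ → Set ((ℤ → Fin 2) × (ℤ → Fin 2))) (hm : ∀ n, P (n+1) ⊆ P n)
    (hne : ∀ n, (P n).Nonempty) (hc : ∀ n, IsClosed (P n)) : ∃ q, ∀ n, q ∈ P n := by
  obtain ⟨q, hq⟩ := IsCompact.nonempty_iInter_of_sequence_nonempty_isCompact_isClosed P hm hne
    (hc 0).isCompact hc
  exact ⟨q, fun n => Set.mem_iInter.1 hq n⟩

lemma limit_agree (A B : Set (ℤ → Fin 2)) (hA : IsClosed A) (hB : IsClosed B)
    (h : ∀ n : ℕ, ∃ x ∈ A, ∃ y ∈ B, (∀ i : ℤ, -n ≤ i → i < 0 → x i = y i) ∧ x 0 ≠ y 0) :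
    ∃ x ∈ A, ∃ y ∈ B, (∀ i < 0, x i = y i) ∧ x 0 ≠ y 0 := by
  obtain ⟨⟨x, y⟩, hq⟩ := limit_pair (fun n => (A ×ˢ B) ∩
      ({q | ∀ i ∈ Set.Ico (-n : ℤ) 0, q.1 i = q.2 i} ∩ {q | q.1 0 ≠ q.2 0}))
    (by
      rintro n q ⟨h1, h2, h3⟩
      refine ⟨h1, fun i hi => h2 i ?_, h3⟩
      simp only [Set.mem_Ico] at hi ⊢; push_cast; omega)
    (by
      intro n
      obtain ⟨x, hx, y, hy, h1, h2⟩ := h n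
      exact ⟨(x, y), ⟨hx, hy⟩, fun i hi => h1 i hi.1 hi.2, h2⟩)
    (by
      intro n
      exact (hA.prod hB).inter ((isClosed_agree _).inter
        (isClosed_ne (fun q : (ℤ → Fin 2) × (ℤ → Fin 2) => q.1 0) (fun q => q.2 0)
          (by fun_prop) (by fun_prop))))
  refine ⟨x, (hq 0).1.1, y, (hq 0).1.2, ?_, (hq 0).2.2⟩
  intro i hi
  exact (hq (-i).toNat).2.1 i (by simp only [Set.mem_Ico]; omega)

lemma lep_congr {x y : ℤ → Fin 2} (hx : LEP x) (h : ∀ i < 0, x i = y i) : LEP y := by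
  obtain ⟨p, hp, m, hm⟩ := hx
  refine ⟨p, hp, min m 0, fun i hi => ?_⟩
  rw [← h i (by omega), ← h (i - p) (by omega)]
  exact hm i (by omega)

lemma per_mul {x : ℤ → Fin 2} {p : ℕ} (h : ∀ i, x (i - p) = x i) (c : ℕ) (i : ℤ) :
    x (i - (p * c : ℕ)) = x i := by
  induction c with
  | zero => simp
  | succ c ih =>
    rw [← ih, ← h (i - (p * c : ℕ))]
    congr 1; push_cast; ring

lemma per_eq {x y : ℤ → Fin 2} (hx : Per x) (hy : Per y) (h : ∀ i < 0, x i = y i) : x 0 = y 0 := by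
  obtain ⟨p, hp, hp'⟩ := hx
  obtain ⟨q, hq, hq'⟩ := hy
  rw [← per_mul hp' q 0, ← per_mul hq' p 0, mul_comm q p]
  apply h
  have : 0 < p * q := by positivity
  omega

/-- In the case where every left eventually periodic point is periodic, `X` is minimal. -/
lemma minimal_of {X : Set (ℤ → Fin 2)} (h : Sturm X) (h2 : ∀ x ∈ X, LEP x → Per x)
    (n : ℕ) (s) (hs : s ∈ WW X n) (y) (hy : y ∈ X) : ∃ a, win y a n = s := by
  have key : ∀ x ∈ X, ∀ y ∈ X, LEP x → (∀ i < 0, x i = y i) → x 0 = y 0 := by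
    intro x hx y hy hl hxy
    exact per_eq (h2 x hx hl) (h2 y hy (lep_congr hl hxy)) hxy
  by_contra hcon
  push Not at hcon
  set Y : Set (ℤ → Fin 2) := {y | y ∈ X ∧ ∀ a, win y a n ≠ s} with hY
  have hYc : IsClosed Y := by
    have : Y = X ∩ ⋂ a : ℤ, {y | win y a n = s}ᶜ := by
      ext z; simp [hY]
    rw [this]
    refine h.closed.inter (isClosed_iInter fun a => ?_)
    have ho : IsOpen {y | win y a n = s} := by
      have : {y | win y a n = s} = (fun y => win y a n) ⁻¹' {s} := rfl
      rw [this]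
      exact (isOpen_discrete _).preimage (by unfold win; fun_prop)
    exact ho.isClosed_compl
  have hYinv : ∀ a, ∀ y ∈ Y, sh a y ∈ Y := by
    rintro a y ⟨hy1, hy2⟩
    refine ⟨h.inv _ _ hy1, fun b hb => hy2 (b + a) ?_⟩
    rw [← hb]; funext i; simp only [win, sh]; congr 1; ring
  have hYlep : ∀ y ∈ Y, LEP y := fun y hy => lep_of_omit h n s hs y hy.1 (fun a _ => hy.2 a)
  have hyY : y ∈ Y := ⟨hy, hcon⟩
  by_cases hB : ∀ N : ℕ, ∃ x ∈ Y, ∃ y ∈ X, (∀ i : ℤ, -N ≤ i → i < 0 → x i = y i) ∧ x 0 ≠ y 0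
  · obtain ⟨x, hx, z, hz, h3, h4⟩ := limit_agree Y X hYc h.closed hB
    exact h4 (key x hx.1 z hz (hYlep x hx) h3)
  · push Not at hB
    obtain ⟨N, hN⟩ := hB
    have hfw : ∀ x ∈ Y, ∀ z ∈ X, ∀ a b : ℤ, (∀ k : ℕ, k < N → x (a + k) = z (b + k)) →
        ∀ k : ℕ, x (a + k) = z (b + k) := by
      intro x hx z hz a b hk k
      induction k using Nat.strong_induction_on with
      | _ k ih =>
        by_cases hkN : k < N
        · exact hk k hkN
        · have := hN (sh (a + k) x) (hYinv _ _ hx) (sh (b + k) z) (h.inv _ _ hz) (by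
            intro i hi1 hi2
            have := ih (i + k).toNat (by omega)
            simp only [sh]
            convert this using 2 <;> omega)
          simpa [sh] using this
    obtain ⟨x, hx, z, hz, h3, h4⟩ := limit_agree X X h.closed h.closed (rs_exists h)
    apply h4
    apply key x hx z hz _ h3
    apply lep_of_omit h N (win y 0 N) ⟨y, hy, 0, rfl⟩ x hx
    intro a ha hcc
    apply h4
    rw [win_eq_iff] at hcc
    have e1 := hfw y hyY x hx 0 a (fun k hk => (hcc k hk).symm) (-a).toNat
    have e2 := hfw y hyY z hz 0 a (fun k hk => by
      rw [← hcc k hk]; exact h3 _ (by omega)) (-a).toNat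
    have e3 : a + ((-a).toNat : ℤ) = 0 := by omega
    rw [e3] at e1 e2
    rw [← e1, ← e2]

/-- In the other case, a nonperiodic left eventually periodic point is right eventually periodic. -/
lemma rep_of {X : Set (ℤ → Fin 2)} (h : Sturm X) (x) (hx : x ∈ X) (hl : LEP x) (hp : ¬ Per x) :
    ∃ p : ℕ, 0 < p ∧ ∃ M : ℤ, ∀ i, M ≤ i → x (i + p) = x i := by
  classical
  obtain ⟨p, hp0, m0, hm0⟩ := hl
  obtain ⟨m, hm, hm'⟩ : ∃ m : ℤ, x (m - p) ≠ x m ∧ ∀ i < m, x (i - p) = x i := by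
    have h1 : ∃ i, x (i - p) ≠ x i := by
      by_contra hc
      push Not at hc
      exact hp ⟨p, hp0, hc⟩
    obtain ⟨m, hm, hm'⟩ := Int.exists_least_of_bdd (P := fun i => x (i - p) ≠ x i)
      ⟨m0, fun z hz => by by_contra hlt; exact hz (hm0 z (by omega))⟩ h1
    refine ⟨m, hm, fun i hi => ?_⟩
    by_contra hc
    have := hm' i hc
    omega
  have rs : ∀ n : ℕ, ∀ a b : ℤ, (∀ k : ℕ, k < n → x (a + k) = x (b + k)) → x (a + n) ≠ x (b + n) →
      ∀ k : ℕ, k < n → x (a + k) = x (m - n + k) := by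
    intro n a b h1 h2
    refine rs_unique h n x x x x hx hx hx hx a b (m - n) (m - n - p) h1 h2 ?_ ?_
    · intro k hk
      rw [← hm' (m - n + k) (by omega)]
      congr 1; ring
    · have e1 : m - n + n = m := by ring
      have e2 : m - n - p + n = m - p := by ring
      rw [e1, e2]; exact hm.symm
  by_cases hrec : ∃ m', m < m' ∧ ∀ k : ℕ, k ≤ p → x (m - p + k) = x (m' - p + k)
  · obtain ⟨m', hlt, hk⟩ := hrec
    have hall : ∀ k : ℕ, x (m - p + k) = x (m' - p + k) := by
      intro k
      induction k using Nat.strong_induction_on with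
      | _ k ih =>
        by_cases hkp : k ≤ p
        · exact hk k hkp
        · by_contra hne
          have hr := rs k (m - p) (m' - p) ih hne
          have r1 := hr 0 (by omega)
          have r2 := hr p (by omega)
          apply hm
          have e1 : m - p + (0:ℕ) = m - p := by simp
          have e2 : m - p + p = m := by ring
          rw [e1] at r1
          rw [e2] at r2
          rw [r1, r2, ← hm' (m - k + p) (by omega)]
          congr 1; simp
    refine ⟨(m' - m).toNat, by omega, m - p, fun i hi => ?_⟩
    have := hall (i - (m - p)).toNat
    have e1 : m - p + (i - (m - p)).toNat = i := by omega
    have e2 : m' - p + (i - (m - p)).toNat = i + (m' - m).toNat := by omega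
    rw [e1, e2] at this
    exact this.symm
  · have hrec' : ∀ m', m < m' → (∀ k : ℕ, k < p → x (m' - p + k) = x (m - p + k)) → x m' ≠ x m := by
      intro m' hlt hk heq
      apply hrec
      refine ⟨m', hlt, fun k hkp => ?_⟩
      by_cases hkp' : k < p
      · exact (hk k hkp').symm
      · have : k = p := by omega
        subst this
        have e1 : m - k + k = m := by ring
        have e2 : m' - k + k = m' := by ring
        rw [e1, e2, heq]
    have hdet : ∀ q q', m < q → m < q' → (∀ k : ℕ, k < p → x (q - p + k) = x (q' - p + k)) →
        x q = x q' := by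
      intro q q' hq hq' hk
      by_contra hne
      have e1 : q - p + p = q := by ring
      have e2 : q' - p + p = q' := by ring
      have hr := rs p (q - p) (q' - p) hk (by rw [e1, e2]; exact hne)
      have n1 := hrec' q hq hr
      have n2 := hrec' q' hq' (fun k hkp => by rw [← hk k hkp, hr k hkp])
      have : ∀ a b c : Fin 2, a ≠ c → b ≠ c → a = b := by decide
      exact hne (this _ _ _ n1 n2)
    obtain ⟨a, b, hab, he⟩ := Finite.exists_ne_map_eq_of_infinite
      (fun j : ℕ => win x (m + 1 + j - p) p)
    wlog hlt : a < b generalizing a b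
    · exact this b a hab.symm he.symm (by omega)
    have he' := (win_eq_iff _ _ _ _ _).1 he
    have hall : ∀ k : ℕ, x (m + 1 + a - p + k) = x (m + 1 + b - p + k) := by
      intro k
      induction k using Nat.strong_induction_on with
      | _ k ih =>
        by_cases hkp : k < p
        · exact he' k hkp
        · apply hdet _ _ (by omega) (by omega)
          intro j hj
          have := ih (k - p + j) (by omega)
          convert this using 2 <;> push_cast [Nat.cast_sub (not_lt.1 hkp)] <;> ring
    refine ⟨b - a, by omega, m + 1 + a - p, fun i hi => ?_⟩
    have := hall (i - (m + 1 + a - p)).toNat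
    have e1 : m + 1 + a - p + (i - (m + 1 + a - p)).toNat = i := by omega
    have e2 : m + 1 + b - p + (i - (m + 1 + a - p)).toNat = i + (b - a : ℕ) := by omega
    rw [e1, e2] at this
    exact this.symm

/-- `Σ⁰₂` in a convenient form. -/
def IsS2 (P : Set (List (Fin 2))) : Prop :=
  ∃ D : List (Fin 2) → ℕ → ℕ → Bool,
    Primrec (fun q : List (Fin 2) × ℕ × ℕ => D q.1 q.2.1 q.2.2) ∧
    ∀ s, s ∈ P ↔ ∃ k, ∀ j, D s k j = true

lemma IsS2.of {P : Set (List (Fin 2))} {K J : Type} [Primcodable K] [Primcodable J]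
    (D : List (Fin 2) → K → J → Bool)
    (hD : Primrec (fun q : List (Fin 2) × K × J => D q.1 q.2.1 q.2.2))
    (h : ∀ s, s ∈ P ↔ ∃ k, ∀ j, D s k j = true) : IsS2 P := by
  refine ⟨fun s k j => Option.casesOn (Encodable.decode (α := K) k) false
    (fun k0 => Option.casesOn (Encodable.decode (α := J) j) true (fun j0 => D s k0 j0)), ?_, ?_⟩
  · refine Primrec.option_casesOn (Primrec.decode.comp (Primrec.fst.comp Primrec.snd))
      (Primrec.const false) ?_
    refine Primrec.option_casesOn
      (Primrec.decode.comp (Primrec.snd.comp (Primrec.snd.comp Primrec.fst))) (Primrec.const true) ?_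
    exact hD.comp (Primrec.pair (Primrec.fst.comp (Primrec.fst.comp Primrec.fst))
      (Primrec.pair (Primrec.snd.comp Primrec.fst) Primrec.snd))
  · intro s
    rw [h]
    constructor
    · rintro ⟨k, hk⟩
      refine ⟨Encodable.encode k, fun j => ?_⟩
      simp only [Encodable.encodek]
      cases hj : Encodable.decode (α := J) j with
      | none => rfl
      | some j0 => exact hk j0
    · rintro ⟨k, hk⟩
      cases hkk : Encodable.decode (α := K) k with
      | none => simp [hkk] at hk
      | some k0 =>
        refine ⟨k0, fun j => ?_⟩
        have := hk (Encodable.encode j)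
        simp only [hkk, Encodable.encodek] at this
        exact this

lemma IsS2.sigma {P : Set (List (Fin 2))} (h : IsS2 P) : SigmaLang 2 P := by
  obtain ⟨D, hD, h⟩ := h
  refine ⟨fun b => ∃ s : List (Fin 2), Encodable.encode s = b.unpair.1 ∧ ∀ j, D s b.unpair.2 j = true,
    ⟨fun c => ∀ s : List (Fin 2), Encodable.encode s = c.unpair.1.unpair.1 →
      ¬ D s c.unpair.1.unpair.2 c.unpair.2 = true, ?_, ?_⟩, ?_⟩
  · have hprim : Primrec (fun c : ℕ => (Option.casesOn (Encodable.decode (α := List (Fin 2)) c.unpair.1.unpair.1) false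
      (fun s => (Encodable.encode s == c.unpair.1.unpair.1) && D s c.unpair.1.unpair.2 c.unpair.2) : Bool)) := by
      have u1 : Primrec (fun c : ℕ => c.unpair.1) := Primrec.fst.comp Primrec.unpair
      have u2 : Primrec (fun c : ℕ => c.unpair.2) := Primrec.snd.comp Primrec.unpair
      refine Primrec.option_casesOn (Primrec.decode.comp (u1.comp u1)) (Primrec.const false) ?_
      refine Primrec.and.comp (Primrec.beq.comp (Primrec.encode.comp Primrec.snd)
        ((u1.comp u1).comp Primrec.fst)) ?_
      exact hD.comp (Primrec.pair Primrec.snd (Primrec.pair ((u2.comp u1).comp Primrec.fst)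
        (u2.comp Primrec.fst)))
    refine ComputablePred.computable_iff.2 ⟨_, hprim.to_comp, ?_⟩
    funext c
    rw [eq_iff_iff]
    push Not
    constructor
    · rintro ⟨s, hs, hd⟩
      rw [← hs, Encodable.encodek]
      simp [hd]
    · intro hb
      cases hs : Encodable.decode (α := List (Fin 2)) c.unpair.1.unpair.1 with
      | none => simp [hs] at hb
      | some s =>
        simp only [hs, Bool.and_eq_true, beq_iff_eq] at hb
        exact ⟨s, hb.1, hb.2⟩
  · intro b
    simp only [Nat.unpair_pair]
    constructor
    · intro hb
      by_cases hs : ∃ s : List (Fin 2), Encodable.encode s = b.unpair.1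
      · obtain ⟨s, hs⟩ := hs
        push Not at hb
        obtain ⟨j, hj⟩ := hb s hs
        refine ⟨j, fun s' hs' => ?_⟩
        have : s' = s := Encodable.encode_injective (hs'.trans hs.symm)
        rw [this]; exact hj
      · exact ⟨0, fun s hs' => absurd ⟨s, hs'⟩ hs⟩
    · rintro ⟨j, hj⟩ ⟨s, hs, hd⟩
      exact hj s hs (hd j)
  · intro m
    simp only [Nat.unpair_pair]
    constructor
    · rintro ⟨w, hw, hP⟩
      obtain ⟨k, hk⟩ := (h w).1 hP
      exact ⟨k, w, hw, hk⟩
    · rintro ⟨k, w, hw, hk⟩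
      exact ⟨w, hw, (h w).2 ⟨k, hk⟩⟩

lemma primrec_beqL : Primrec₂ (fun a b : List (Fin 2) => a == b) :=
  (Primrec.eq (α := List (Fin 2))).decide.of_eq (fun a b => by
    rw [Bool.eq_iff_iff]; simp)

lemma IsS2.compl {P : Set (List (Fin 2))} (h : IsS2 P)
    (hc : ∀ n : ℕ, {w ∈ P | w.length = n}.ncard = n + 1) : IsS2 {w | w ∉ P} := by
  classical
  obtain ⟨D, hD, h⟩ := h
  refine IsS2.of (K := List (List (Fin 2) × ℕ)) (J := ℕ × ℕ × ℕ)
    (fun s W q => (W.length == s.length + 1) &&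
      (Option.casesOn (W[q.1]?) true (fun wk => (wk.1.length == s.length) && !(wk.1 == s) &&
        D wk.1 wk.2 q.2.2 && (Option.casesOn (W[q.2.1]?) true
          (fun wk' => !(wk.1 == wk'.1) || (q.1 == q.2.1)) : Bool)) : Bool)) ?_ ?_
  · have len : ∀ {α : Type} [Primcodable α], Primrec (@List.length α) := Primrec.list_length
    have fs : Primrec (fun q : List (Fin 2) × List (List (Fin 2) × ℕ) × ℕ × ℕ × ℕ => q.1) := Primrec.fst
    have fW : Primrec (fun q : List (Fin 2) × List (List (Fin 2) × ℕ) × ℕ × ℕ × ℕ => q.2.1) :=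
      Primrec.fst.comp Primrec.snd
    have fi : Primrec (fun q : List (Fin 2) × List (List (Fin 2) × ℕ) × ℕ × ℕ × ℕ => q.2.2.1) :=
      Primrec.fst.comp (Primrec.snd.comp Primrec.snd)
    have fi' : Primrec (fun q : List (Fin 2) × List (List (Fin 2) × ℕ) × ℕ × ℕ × ℕ => q.2.2.2.1) :=
      Primrec.fst.comp (Primrec.snd.comp (Primrec.snd.comp Primrec.snd))
    have fj : Primrec (fun q : List (Fin 2) × List (List (Fin 2) × ℕ) × ℕ × ℕ × ℕ => q.2.2.2.2) :=
      Primrec.snd.comp (Primrec.snd.comp (Primrec.snd.comp Primrec.snd))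
    refine Primrec.and.comp (Primrec.beq.comp (len.comp fW) (Primrec.succ.comp (len.comp fs))) ?_
    refine Primrec.option_casesOn (Primrec.list_getElem?.comp fW fi) (Primrec.const true) ?_
    refine Primrec.and.comp (Primrec.and.comp (Primrec.and.comp ?_ ?_) ?_) ?_
    · exact Primrec.beq.comp (len.comp (Primrec.fst.comp Primrec.snd)) (len.comp (fs.comp Primrec.fst))
    · exact Primrec.not.comp (primrec_beqL.comp (Primrec.fst.comp Primrec.snd) (fs.comp Primrec.fst))
    · exact hD.comp (Primrec.pair (Primrec.fst.comp Primrec.snd)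
        (Primrec.pair (Primrec.snd.comp Primrec.snd) (fj.comp Primrec.fst)))
    · refine Primrec.option_casesOn ((Primrec.list_getElem?.comp fW fi').comp Primrec.fst)
        (Primrec.const true) ?_
      exact Primrec.or.comp (Primrec.not.comp (primrec_beqL.comp
        (Primrec.fst.comp (Primrec.snd.comp Primrec.fst)) (Primrec.fst.comp Primrec.snd)))
        (Primrec.beq.comp ((fi.comp Primrec.fst).comp Primrec.fst)
          ((fi'.comp Primrec.fst).comp Primrec.fst))
  · intro s
    have hfin : ∀ n : ℕ, {w ∈ P | w.length = n}.Finite := by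
      intro n
      apply Set.finite_of_ncard_ne_zero
      rw [hc]; omega
    constructor
    · intro hs
      have hk : ∀ w : List (Fin 2), ∃ k, w ∈ P → ∀ j, D w k j = true := by
        intro w
        by_cases hw : w ∈ P
        · obtain ⟨k, hk⟩ := (h w).1 hw
          exact ⟨k, fun _ => hk⟩
        · exact ⟨0, fun hh => absurd hh hw⟩
      choose κ hκ using hk
      set L := (hfin s.length).toFinset.toList with hL
      have hnd : L.Nodup := Finset.nodup_toList _
      have hlen : L.length = s.length + 1 := by
        rw [hL, Finset.length_toList, ← Set.ncard_eq_toFinset_card _ (hfin s.length), hc]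
      have hmem : ∀ w ∈ L, w ∈ P ∧ w.length = s.length := by
        intro w hw
        simpa [hL] using hw
      refine ⟨L.map (fun w => (w, κ w)), ?_⟩
      rintro ⟨i, i', j⟩
      simp only [List.length_map, hlen, List.getElem?_map, beq_self_eq_true, Bool.true_and]
      cases hi : L[i]? with
      | none => rfl
      | some w =>
        have hw := hmem w (List.mem_of_getElem? hi)
        have hws : w ≠ s := by rintro rfl; exact hs hw.1
        cases hi' : L[i']? with
        | none => simp [hw.2, hws, hκ w hw.1 j]
        | some w' =>
          simp [hw.2, hws, hκ w hw.1 j]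
          by_cases hww : w = w'
          · right
            subst hww
            rw [List.getElem?_eq_some_iff] at hi hi'
            obtain ⟨a1, a2⟩ := hi
            obtain ⟨b1, b2⟩ := hi'
            exact (hnd.getElem_inj_iff).1 (a2.trans b2.symm)
          · left; exact hww
    · rintro ⟨W, hW⟩ hs
      have hlen : W.length = s.length + 1 := by
        have := hW (0, 0, 0)
        simp only [Bool.and_eq_true, beq_iff_eq] at this
        exact this.1
      have hget : ∀ i (hi : i < W.length), (W[i].1).length = s.length ∧ W[i].1 ≠ s ∧ W[i].1 ∈ P ∧
          ∀ i' (hi' : i' < W.length), W[i].1 = W[i'].1 → i = i' := by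
        intro i hi
        have key : ∀ i' j, _ := fun i' j => hW (i, i', j)
        simp only [List.getElem?_eq_getElem hi, Bool.and_eq_true, beq_iff_eq, Bool.not_eq_true',
          beq_eq_false_iff_ne] at key
        refine ⟨(key 0 0).2.1.1.1, (key 0 0).2.1.1.2, (h _).2 ⟨W[i].2, fun j => (key 0 j).2.1.2⟩, ?_⟩
        intro i' hi' he
        have := (key i' 0).2.2
        simp only [List.getElem?_eq_getElem hi'] at this
        simpa [he] using this
      set T : Finset (List (Fin 2)) := Finset.univ.image (fun i : Fin W.length => W[i].1) with hT
      have hTc : T.card = s.length + 1 := by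
        rw [hT, Finset.card_image_of_injective, Finset.card_univ, Fintype.card_fin, hlen]
        intro a b hab
        exact Fin.ext ((hget a a.2).2.2.2 b b.2 hab)
      have hsub : (↑(insert s T) : Set (List (Fin 2))) ⊆ {w ∈ P | w.length = s.length} := by
        intro w hw
        simp only [Finset.coe_insert, Set.mem_insert_iff, Finset.mem_coe] at hw
        rcases hw with rfl | hw
        · exact ⟨hs, rfl⟩
        · simp only [hT, Finset.mem_image, Finset.mem_univ, true_and] at hw
          obtain ⟨i, rfl⟩ := hw
          exact ⟨(hget i i.2).2.2.1, (hget i i.2).1⟩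
      have hle := Set.ncard_le_ncard hsub (hfin _)
      rw [hc, Set.ncard_coe_finset, Finset.card_insert_of_notMem, hTc] at hle
      · omega
      · intro hw
        simp only [hT, Finset.mem_image, Finset.mem_univ, true_and] at hw
        obtain ⟨i, hi⟩ := hw
        exact (hget i i.2).2.1 hi

lemma word_def (x : ℤ → Fin 2) (a : ℤ) (n : ℕ) :
    word x a n = (List.range n).map fun k : ℕ => x (a + k) := by
  unfold word
  have : (do let a ← List.range n; pure (a : ℤ)) = (List.range n).map (fun k : ℕ => (k : ℤ)) :=
    List.flatMap_pure_eq_map _ _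
  rw [this, List.map_map]; rfl

@[simp] lemma word_length (x : ℤ → Fin 2) (a : ℤ) (n : ℕ) : (word x a n).length = n := by
  simp [word_def]

lemma word_ofFn (x : ℤ → Fin 2) (a : ℤ) (n : ℕ) : word x a n = List.ofFn (win x a n) := by
  apply List.ext_getElem <;> simp [word_def, win]

lemma word_inj (x y : ℤ → Fin 2) (a b : ℤ) (n : ℕ) :
    word x a n = word y b n ↔ win x a n = win y b n := by
  rw [word_ofFn, word_ofFn]; exact List.ofFn_injective.eq_iff

lemma sturm_of (X : Set (ℤ → Fin 2)) (hXc : IsClosed X) (hXs : shift '' X = X)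
    (hSturm : ∀ n : ℕ, {w ∈ lang X | w.length = n}.ncard = n + 1) : Sturm X := by
  refine ⟨hXc, ?_, ?_⟩
  · have h1 : ∀ x ∈ X, sh 1 x ∈ X := by
      intro x hx
      rw [← hXs]; exact ⟨x, hx, rfl⟩
    have h2 : ∀ x ∈ X, sh (-1) x ∈ X := by
      intro x hx
      rw [← hXs] at hx
      obtain ⟨y, hy, rfl⟩ := hx
      have : sh (-1) (shift y) = y := by
        funext i; simp [sh, shift]
      rw [this]; exact hy
    intro a x hx
    induction a using Int.induction_on with
    | zero =>
      have : sh 0 x = x := by funext j; simp [sh]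
      rw [this]; exact hx
    | succ i ih =>
      have := h1 _ ih
      convert this using 1
      funext j; simp only [sh]; congr 1; ring
    | pred i ih =>
      have := h2 _ ih
      convert this using 1
      funext j; simp only [sh]; congr 1; ring
  · intro n
    rw [← hSturm n]
    have : {w ∈ lang X | w.length = n} = List.ofFn '' (WW X n) := by
      ext w; constructor
      · rintro ⟨⟨x, hx, i, hw⟩, rfl⟩
        refine ⟨win x i w.length, ⟨x, hx, i, rfl⟩, ?_⟩
        rw [← word_ofFn, hw]
      · rintro ⟨_, ⟨x, hx, a, rfl⟩, rfl⟩
        refine ⟨⟨x, hx, a, ?_⟩, by simp⟩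
        rw [← word_ofFn, word_length]
    rw [this, Set.ncard_image_of_injective _ List.ofFn_injective]

lemma mem_lang_iff {X : Set (ℤ → Fin 2)} (s : List (Fin 2)) :
    s ∈ lang X ↔ (fun i : Fin s.length => s[i]) ∈ WW X s.length := by
  constructor
  · rintro ⟨x, hx, a, h⟩
    refine ⟨x, hx, a, ?_⟩
    apply List.ofFn_injective
    rw [← word_ofFn, h]; simp
  · rintro ⟨x, hx, a, h⟩
    refine ⟨x, hx, a, ?_⟩
    rw [word_ofFn, h]; simp

lemma word_eq_of_win {x : ℤ → Fin 2} {a : ℤ} {s : List (Fin 2)}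
    (h : win x a s.length = fun i : Fin s.length => s[i]) : word x a s.length = s := by
  rw [word_ofFn, h]; simp

lemma win_of_word {x : ℤ → Fin 2} {a : ℤ} {s : List (Fin 2)}
    (h : word x a s.length = s) : win x a s.length = fun i : Fin s.length => s[i] := by
  apply List.ofFn_injective
  rw [← word_ofFn, h]; simp

lemma primrec_ep (h : ℕ → Fin 2) (p M : ℕ) (hp : 0 < p) (hh : ∀ n, M ≤ n → h (n + p) = h n) :
    Primrec h := by
  have h1 : ∀ c n, M ≤ n → h (n + p * c) = h n := by
    intro c n hn
    induction c with
    | zero => simp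
    | succ c ih =>
      rw [← ih, ← hh (n + p * c) (by omega)]
      congr 1; ring
  have h2 : Primrec (fun n => (List.map h (List.range (M + p))).getD
      (if n < M then n else M + (n - M) % p) 0) := by
    refine (Primrec.list_getD 0).comp (Primrec.const _) ?_
    refine Primrec.ite (Primrec.nat_lt.comp Primrec.id (Primrec.const M)) Primrec.id ?_
    exact Primrec.nat_add.comp (Primrec.const M) (Primrec.nat_mod.comp
      (Primrec.nat_sub.comp Primrec.id (Primrec.const M)) (Primrec.const p))
  refine h2.of_eq fun n => ?_
  have hmod := Nat.mod_lt (n - M) hp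
  by_cases hn : n < M
  · have : n < M + p := by omega
    simp [hn, List.getD_eq_getElem?_getD, this]
  · simp only [hn, if_false]
    have : M + (n - M) % p < M + p := by omega
    rw [List.getD_eq_getElem?_getD]
    simp only [List.getElem?_map, List.getElem?_range this, Option.map_some, Option.getD_some]
    rw [← h1 ((n - M) / p) (M + (n - M) % p) (by omega)]
    congr 1
    have := Nat.mod_add_div (n - M) p
    omega

lemma isS2_of_ep (x : ℤ → Fin 2) (hl : LEP x)
    (hr : ∃ p : ℕ, 0 < p ∧ ∃ M : ℤ, ∀ i, M ≤ i → x (i + p) = x i) :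
    IsS2 {s | ∃ a : ℤ, word x a s.length = s} := by
  have pr : Primrec (fun n : ℕ => x n) := by
    obtain ⟨p, hp, M, h⟩ := hr
    refine primrec_ep _ p M.toNat hp fun n hn => ?_
    have := h n (by omega)
    push_cast; exact this
  have pl : Primrec (fun n : ℕ => x (-n)) := by
    obtain ⟨p, hp, M, h⟩ := hl
    refine primrec_ep _ p (1 - M).toNat hp fun n hn => ?_
    have := h (-n) (by omega)
    rw [← this]
    congr 1; push_cast; ring
  refine IsS2.of (K := ℕ × ℕ) (J := Unit) (fun s k _ => (List.range s.length).map (fun j =>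
    if k.2 + j < k.1 then x (-((k.1 - (k.2 + j) : ℕ) : ℤ)) else x ((k.2 + j - k.1 : ℕ) : ℤ)) == s) ?_ ?_
  · refine primrec_beqL.comp ?_ Primrec.fst
    refine Primrec.list_map (Primrec.list_range.comp (Primrec.list_length.comp Primrec.fst)) ?_
    have ga : Primrec (fun q : (List (Fin 2) × (ℕ × ℕ) × Unit) × ℕ => q.1.2.1.1) :=
      Primrec.fst.comp (Primrec.fst.comp (Primrec.snd.comp Primrec.fst))
    have gb : Primrec (fun q : (List (Fin 2) × (ℕ × ℕ) × Unit) × ℕ => q.1.2.1.2 + q.2) :=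
      Primrec.nat_add.comp (Primrec.snd.comp (Primrec.fst.comp (Primrec.snd.comp Primrec.fst))) Primrec.snd
    exact Primrec.ite (Primrec.nat_lt.comp gb ga) (pl.comp (Primrec.nat_sub.comp ga gb))
      (pr.comp (Primrec.nat_sub.comp gb ga))
  · intro s
    have key : ∀ a b : ℕ, (List.range s.length).map (fun j =>
      if b + j < a then x (-((a - (b + j) : ℕ) : ℤ)) else x ((b + j - a : ℕ) : ℤ))
        = word x (b - a) s.length := by
      intro a b
      rw [word_def]
      apply List.map_congr_left
      intro j _
      split_ifs <;> (congr 1; omega)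
    simp only [key, beq_iff_eq, Set.mem_ofPred_eq]
    constructor
    · rintro ⟨a, ha⟩
      refine ⟨((-a).toNat, a.toNat), fun _ => ?_⟩
      convert ha using 2
      simp only; omega
    · rintro ⟨k, hk⟩
      exact ⟨_, hk ()⟩

lemma ca_sh {f : (ℤ → Fin 2) → (ℤ → Fin 2)} (hf : IsCA f) (a : ℤ) (x) : f (sh a x) = sh a (f x) := by
  have h1 : ∀ x, f (sh 1 x) = sh 1 (f x) := fun x => congrFun hf.2 x
  have hadd : ∀ (a b : ℤ) (x), sh a (sh b x) = sh (a + b) x := by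
    intro a b x; funext i; simp only [sh]; congr 1; ring
  have h0 : ∀ x, sh 0 x = x := by intro x; funext i; simp [sh]
  have h2 : ∀ x, f (sh (-1) x) = sh (-1) (f x) := by
    intro x
    have := h1 (sh (-1) x)
    rw [hadd] at this
    norm_num [h0] at this
    rw [this, hadd]; norm_num [h0]
  induction a using Int.induction_on with
  | zero => rw [h0, h0]
  | succ i ih => rw [add_comm, ← hadd, h1, ih, hadd]
  | pred i ih =>
    have e : (-(i:ℤ) - 1) = -1 + -i := by ring
    rw [e, ← hadd, h2, ih, hadd]

lemma ca_local {f : (ℤ → Fin 2) → (ℤ → Fin 2)} (hf : IsCA f) :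
    ∃ R : ℕ, ∀ x y : ℤ → Fin 2, ∀ a b : ℤ,
      (∀ k : ℕ, k < 2 * R + 1 → x (a + k) = y (b + k)) → f x (a + R) = f y (b + R) := by
  have h0 : ∃ R : ℕ, ∀ x y : ℤ → Fin 2, (∀ i ∈ Set.Icc (-R : ℤ) R, x i = y i) → f x 0 = f y 0 := by
    by_contra hcon
    push Not at hcon
    obtain ⟨⟨x, y⟩, hq⟩ := limit_pair (fun n => 
      ({q | ∀ i ∈ Set.Icc (-n : ℤ) n, q.1 i = q.2 i} ∩ {q | f q.1 0 ≠ f q.2 0}))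
      (by
        rintro n q ⟨h2, h3⟩
        refine ⟨fun i hi => h2 i ?_, h3⟩
        simp only [Set.mem_Icc] at hi ⊢; push_cast; omega)
      (by
        intro n
        obtain ⟨x, y, h1, h2⟩ := hcon n
        exact ⟨(x, y), h1, h2⟩)
      (by
        intro n
        have hc := hf.1
        exact ((isClosed_agree _).inter
          (isClosed_ne (fun q : (ℤ → Fin 2) × (ℤ → Fin 2) => f q.1 0) (fun q => f q.2 0)
            (by fun_prop) (by fun_prop))))
    have : x = y := by
      funext i
      exact (hq i.natAbs).1 i (by simp only [Set.mem_Icc]; omega)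
    exact (hq 0).2 (by rw [this])
  obtain ⟨R, hR⟩ := h0
  refine ⟨R, fun x y a b h => ?_⟩
  have := hR (sh (a + R) x) (sh (b + R) y) (by
    intro i hi
    simp only [Set.mem_Icc] at hi
    have := h (i + R).toNat (by omega)
    simp only [sh]
    convert this using 2 <;> omega)
  rw [ca_sh hf, ca_sh hf] at this
  simpa [sh] using this

/-- Read a subword, with default value `0`. -/
def rd (u : List (Fin 2)) (i n : ℕ) : List (Fin 2) := (List.range n).map fun k => u.getD (i + k) 0

lemma primrec_rd : Primrec (fun q : List (Fin 2) × ℕ × ℕ => rd q.1 q.2.1 q.2.2) := by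
  unfold rd
  refine Primrec.list_map (Primrec.list_range.comp (Primrec.snd.comp Primrec.snd)) ?_
  exact (Primrec.list_getD 0).comp (Primrec.fst.comp Primrec.fst)
    (Primrec.nat_add.comp (Primrec.fst.comp (Primrec.snd.comp Primrec.fst)) Primrec.snd)

lemma rd_word (x : ℤ → Fin 2) (a : ℤ) (n i m : ℕ) (h : i + m ≤ n) :
    rd (word x a n) i m = word x (a + i) m := by
  rw [rd, word_def x (a + i)]
  apply List.map_congr_left
  intro k hk
  have hk' := List.mem_range.1 hk
  rw [List.getD_eq_getElem?_getD, word_def]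
  simp [List.getElem?_range (show i + k < n by omega)]
  congr 1; ring

/-- The list version of a CA. -/
def FF (R : ℕ) (g : List (Fin 2) → Fin 2) (u : List (Fin 2)) : List (Fin 2) :=
  (List.range (u.length - 2 * R)).map fun i => g (rd u i (2 * R + 1))

lemma primrec_FF (R : ℕ) (g : List (Fin 2) → Fin 2) (hg : Primrec g) : Primrec (FF R g) := by
  unfold FF
  refine Primrec.list_map (Primrec.list_range.comp (Primrec.nat_sub.comp Primrec.list_length
    (Primrec.const (2 * R)))) ?_
  exact hg.comp (primrec_rd.comp (Primrec.pair Primrec.fst (Primrec.pair Primrec.snd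
    (Primrec.const (2 * R + 1)))))

lemma primrecPred_finite (S : Set (List (Fin 2))) (hS : S.Finite) : PrimrecPred (fun w => w ∈ S) := by
  induction S, hS using Set.Finite.induction_on with
  | empty => exact ⟨fun _ => .isFalse (by simp), (Primrec.const false).of_eq (by simp)⟩
  | @insert c _ _ _ ih =>
    refine PrimrecPred.of_eq (PrimrecPred.or (Primrec.eq.comp Primrec.id (Primrec.const c)) ih) ?_
    intro w
    simp [Set.mem_insert_iff]

lemma ca_rule {f : (ℤ → Fin 2) → (ℤ → Fin 2)} (hf : IsCA f) :
    ∃ (R : ℕ) (g : List (Fin 2) → Fin 2), Primrec g ∧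
      ∀ (x : ℤ → Fin 2) (a : ℤ), f x (a + R) = g (word x a (2 * R + 1)) := by
  classical
  obtain ⟨R, hR⟩ := ca_local hf
  set S : Set (List (Fin 2)) := {w | ∃ x a, word x a (2 * R + 1) = w ∧ f x (a + R) = 1} with hS
  have hfin : S.Finite := by
    refine (List.finite_length_eq (Fin 2) (2 * R + 1)).subset ?_
    rintro _ ⟨x, a, rfl, _⟩
    simp
  refine ⟨R, fun w => if w ∈ S then 1 else 0, ?_, ?_⟩
  · exact Primrec.ite (primrecPred_finite S hfin) (Primrec.const 1) (Primrec.const 0)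
  · intro x a
    have h2 : ∀ c : Fin 2, c ≠ 1 → c = 0 := by decide
    dsimp only
    split_ifs with h
    · obtain ⟨y, b, h1, h3⟩ := h
      rw [← h3]
      rw [word_inj, win_eq_iff] at h1
      exact (hR y x b a h1).symm
    · exact h2 _ fun hh => h ⟨x, a, rfl, hh⟩

lemma FF_iterate {f : (ℤ → Fin 2) → (ℤ → Fin 2)} {R : ℕ} {g : List (Fin 2) → Fin 2}
    (hg : ∀ (x : ℤ → Fin 2) (a : ℤ), f x (a + R) = g (word x a (2 * R + 1))) (t : ℕ) :
    ∀ (x : ℤ → Fin 2) (a : ℤ) (n : ℕ),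
      (FF R g)^[t] (word x a (n + 2 * (R * t))) = word (f^[t] x) (a + (R * t : ℕ)) n := by
  induction t with
  | zero => intro x a n; simp
  | succ t ih =>
    intro x a n
    have h1 : FF R g (word x a (n + 2 * (R * (t+1)))) = word (f x) (a + R) (n + 2 * (R * t)) := by
      rw [FF, word_length, word_def (f x)]
      have e : n + 2 * (R * (t+1)) - 2 * R = n + 2 * (R * t) := by
        have : n + 2 * (R * (t+1)) = n + 2 * (R * t) + 2 * R := by ring
        omega
      rw [e]
      apply List.map_congr_left
      intro k hk
      have hk' := List.mem_range.1 hk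
      rw [rd_word _ _ _ _ _ (by
        have : n + 2 * (R * (t+1)) = n + 2 * (R * t) + 2 * R := by ring
        omega), ← hg]
      congr 1; ring
    rw [Function.iterate_succ_apply, Function.iterate_succ_apply, h1, ih]
    congr 1; push_cast; ring

/-- occurrence of `s` in `l` -/
def occ (s l : List (Fin 2)) : Prop := ∃ i < l.length + 1, i + s.length ≤ l.length ∧ rd l i s.length = s

lemma primrec_occ : PrimrecPred (fun q : List (Fin 2) × List (Fin 2) => occ q.1 q.2) := by
  have h : PrimrecRel (fun (i : ℕ) (q : List (Fin 2) × List (Fin 2)) =>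
      i + q.1.length ≤ q.2.length ∧ rd q.2 i q.1.length = q.1) := by
    have l1 : Primrec (fun p : ℕ × List (Fin 2) × List (Fin 2) => p.2.1.length) :=
      Primrec.list_length.comp (Primrec.fst.comp Primrec.snd)
    refine PrimrecPred.and (Primrec.nat_le.comp (Primrec.nat_add.comp Primrec.fst l1)
      (Primrec.list_length.comp (Primrec.snd.comp Primrec.snd))) ?_
    exact Primrec.eq.comp (primrec_rd.comp (Primrec.pair (Primrec.snd.comp Primrec.snd)
      (Primrec.pair Primrec.fst l1))) (Primrec.fst.comp Primrec.snd)
  have h2 := PrimrecRel.exists_mem_list h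
  have h3 := h2.comp (Primrec.list_range.comp
    (Primrec.succ.comp (Primrec.list_length.comp
      (Primrec.snd (α := List (Fin 2)) (β := List (Fin 2)))))) Primrec.id
  refine h3.of_eq fun q => ?_
  simp only [occ, List.mem_range, Nat.succ_eq_add_one, id]

lemma occ_word (s : List (Fin 2)) (x : ℤ → Fin 2) (a : ℤ) (n : ℕ) :
    occ s (word x a n) ↔ ∃ i : ℕ, i + s.length ≤ n ∧ word x (a + i) s.length = s := by
  unfold occ
  rw [word_length]
  constructor
  · rintro ⟨i, _, h1, h2⟩
    rw [rd_word _ _ _ _ _ h1] at h2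
    exact ⟨i, h1, h2⟩
  · rintro ⟨i, h1, h2⟩
    exact ⟨i, by omega, h1, by rw [rd_word _ _ _ _ _ h1]; exact h2⟩

lemma gen_lemma (f : (ℤ → Fin 2) → (ℤ → Fin 2)) (V : Set (ℤ → Fin 2)) (hV : IsOpen V)
    (hsub : genLimitSet f ⊆ V) : {x | ∀ᶠ t in atTop, f^[t] x ∈ V} ∈ residual (ℤ → Fin 2) := by
  set 𝒞 : Set (Set (ℤ → Fin 2)) := {C | IsClosed C ∧ realm f C ∈ residual (ℤ → Fin 2)} with h𝒞
  have hcov : Vᶜ ⊆ ⋃ C : 𝒞, (C : Set (ℤ → Fin 2))ᶜ := by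
    intro x hx
    by_contra hc
    apply hx
    apply hsub
    intro C hC
    by_contra hxC
    exact hc (Set.mem_iUnion.2 ⟨⟨C, hC⟩, hxC⟩)
  obtain ⟨F, hF⟩ := hV.isClosed_compl.isCompact.elim_finite_subcover _
    (fun C : 𝒞 => C.2.1.isOpen_compl) hcov
  have hres : (⋂ C ∈ F, realm f (C : Set (ℤ → Fin 2))) ∈ residual (ℤ → Fin 2) :=
    (Filter.biInter_finset_mem F).2 fun C _ => C.2.2
  filter_upwards [hres] with x hx
  by_contra hcon
  have hfreq : ∃ᶠ t in atTop, f^[t] x ∈ Vᶜ := by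
    simpa [Filter.Frequently] using hcon
  obtain ⟨y, hyV, hy⟩ := hV.isClosed_compl.isCompact.exists_mapClusterPt_of_frequently hfreq
  have := hF hyV
  simp only [Set.mem_iUnion] at this
  obtain ⟨C, hC, hyC⟩ := this
  simp only [Set.mem_iInter] at hx
  exact hyC (hx C hC hy)

lemma isClopen_word (a : ℤ) (s : List (Fin 2)) (n : ℕ) :
    IsClopen {y : ℤ → Fin 2 | word y a n = s} := by
  have h : {y : ℤ → Fin 2 | word y a n = s} = (fun y => win y a n) ⁻¹' {w | List.ofFn w = s} := by
    ext y; simp [word_ofFn]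
  rw [h]
  exact (isClopen_discrete _).preimage (by unfold win; fun_prop)

lemma exists_cyl (U : Set (ℤ → Fin 2)) (hU : IsOpen U) (z) (hz : z ∈ U) :
    ∃ M : ℕ, ∀ x : ℤ → Fin 2, (∀ i ∈ Set.Icc (-M : ℤ) M, x i = z i) → x ∈ U := by
  rw [isOpen_pi_iff] at hU
  obtain ⟨I, u, h1, h2⟩ := hU z hz
  refine ⟨I.sup Int.natAbs, fun x hx => h2 ?_⟩
  intro i hi
  have : i.natAbs ≤ I.sup Int.natAbs := Finset.le_sup (f := Int.natAbs) hi
  rw [hx i (by simp only [Set.mem_Icc]; omega)]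
  exact (h1 i hi).2

lemma isS2_min {X : Set (ℤ → Fin 2)} (hXc : IsClosed X) {f : (ℤ → Fin 2) → (ℤ → Fin 2)}
    (hf : IsCA f) (hgen : genLimitSet f = X)
    (hmin : ∀ s ∈ lang X, ∀ y ∈ X, ∃ a : ℤ, word y a s.length = s) : IsS2 (lang X) := by
  classical
  obtain ⟨R, g, hg, hrule⟩ := ca_rule hf
  refine IsS2.of (K := List (Fin 2) × ℕ) (J := ℕ × List (Fin 2) × List (Fin 2))
    (fun s k j => decide ((¬ (k.2 ≤ j.1 ∧ j.2.1.length = R * j.1 ∧ j.2.2.length = R * j.1)) ∨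
      occ s ((FF R g)^[j.1] (j.2.1 ++ k.1 ++ j.2.2)))) ?_ ?_
  · apply PrimrecPred.decide
    have ps : Primrec (fun q : List (Fin 2) × (List (Fin 2) × ℕ) × ℕ × List (Fin 2) × List (Fin 2) => q.1) :=
      Primrec.fst
    have pv : Primrec (fun q : List (Fin 2) × (List (Fin 2) × ℕ) × ℕ × List (Fin 2) × List (Fin 2) => q.2.1.1) :=
      Primrec.fst.comp (Primrec.fst.comp Primrec.snd)
    have pT : Primrec (fun q : List (Fin 2) × (List (Fin 2) × ℕ) × ℕ × List (Fin 2) × List (Fin 2) => q.2.1.2) :=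
      Primrec.snd.comp (Primrec.fst.comp Primrec.snd)
    have pt : Primrec (fun q : List (Fin 2) × (List (Fin 2) × ℕ) × ℕ × List (Fin 2) × List (Fin 2) => q.2.2.1) :=
      Primrec.fst.comp (Primrec.snd.comp Primrec.snd)
    have pa : Primrec (fun q : List (Fin 2) × (List (Fin 2) × ℕ) × ℕ × List (Fin 2) × List (Fin 2) => q.2.2.2.1) :=
      Primrec.fst.comp (Primrec.snd.comp (Primrec.snd.comp Primrec.snd))
    have pb : Primrec (fun q : List (Fin 2) × (List (Fin 2) × ℕ) × ℕ × List (Fin 2) × List (Fin 2) => q.2.2.2.2) :=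
      Primrec.snd.comp (Primrec.snd.comp (Primrec.snd.comp Primrec.snd))
    have pRt := Primrec.nat_mul.comp (Primrec.const R) pt
    refine PrimrecPred.or (PrimrecPred.not (PrimrecPred.and (Primrec.nat_le.comp pT pt)
      (PrimrecPred.and (Primrec.eq.comp (Primrec.list_length.comp pa) pRt)
        (Primrec.eq.comp (Primrec.list_length.comp pb) pRt)))) ?_
    refine primrec_occ.comp (Primrec.pair ps ?_)
    exact Primrec.nat_iterate pt (Primrec.list_append.comp (Primrec.list_append.comp pa pv) pb)
      ((primrec_FF R g hg).comp Primrec.snd)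
  · intro s
    simp only [decide_eq_true_eq]
    constructor
    · intro hs
      set U : ℕ → Set (ℤ → Fin 2) := fun n => ⋃ i ∈ Finset.Icc (-n : ℤ) n, {y | word y i s.length = s} with hU
      have hUc : ∀ n, IsClopen (U n) := fun n =>
        isClopen_biUnion_finset fun i _ => isClopen_word i s s.length
      have hcov : X ⊆ ⋃ n, U n := by
        intro y hy
        obtain ⟨a, ha⟩ := hmin s hs y hy
        refine Set.mem_iUnion.2 ⟨a.natAbs, Set.mem_iUnion₂.2 ⟨a, ?_, ha⟩⟩
        simp only [Finset.mem_Icc]; omega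
      have hmono : Monotone U := by
        intro m n hmn y hy
        obtain ⟨i, hi, hy⟩ := Set.mem_iUnion₂.1 hy
        refine Set.mem_iUnion₂.2 ⟨i, ?_, hy⟩
        simp only [Finset.mem_Icc] at hi ⊢; omega
      obtain ⟨n, hn⟩ := hXc.isCompact.elim_directed_cover U (fun n => (hUc n).isOpen) hcov
        hmono.directed_le
      have hres := gen_lemma f (U n) (hUc n).isOpen (hgen ▸ hn)
      have hfc : ∀ t, Continuous f^[t] := fun t => hf.1.iterate t
      set G : ℕ → Set (ℤ → Fin 2) := fun T => {x | ∀ t, T ≤ t → f^[t] x ∈ U n} with hG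
      have hGc : ∀ T, IsClosed (G T) := by
        intro T
        have : G T = ⋂ t, ⋂ (_ : T ≤ t), f^[t] ⁻¹' (U n) := by
          ext x; simp [hG]
        rw [this]
        exact isClosed_iInter fun t => isClosed_iInter fun _ => (hUc n).isClosed.preimage (hfc t)
      have hint : ∃ T, (interior (G T)).Nonempty := by
        by_contra hcon
        push Not at hcon
        have h1 : ∀ T, (G T)ᶜ ∈ residual (ℤ → Fin 2) := fun T =>
          residual_of_dense_open (hGc T).isOpen_compl (interior_eq_empty_iff_dense_compl.1 (hcon T))
        have h2 : (⋂ T, (G T)ᶜ) ∈ residual (ℤ → Fin 2) := countable_iInter_mem.2 h1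
        obtain ⟨x, hx1, hx2⟩ := (dense_of_mem_residual (Filter.inter_mem hres h2)).nonempty
        obtain ⟨T, hT⟩ := Filter.eventually_atTop.1 hx1
        exact Set.mem_iInter.1 hx2 T hT
      obtain ⟨T, z, hz⟩ := hint
      obtain ⟨M0, hM0⟩ := exists_cyl _ isOpen_interior z hz
      obtain ⟨M, hM1, hM2⟩ : ∃ M : ℕ, M0 ≤ M ∧ n + s.length ≤ M := ⟨max M0 (n + s.length), by omega, by omega⟩
      refine ⟨(word z (-M) (2 * M + 1), T), ?_⟩
      rintro ⟨t, a, b⟩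
      dsimp only
      by_cases hcond : T ≤ t ∧ a.length = R * t ∧ b.length = R * t
      · right
        obtain ⟨hT, hla, hlb⟩ := hcond
        set l := a ++ word z (-M) (2 * M + 1) ++ b with hl
        set x : ℤ → Fin 2 := fun i => l.getD (i + M + (R * t : ℕ)).toNat 0 with hx
        have hll : l.length = 2 * M + 1 + 2 * (R * t) := by
          simp [hl, hla, hlb]; ring
        have hlx : l = word x (-M - (R * t : ℕ)) (2 * M + 1 + 2 * (R * t)) := by
          apply List.ext_getElem
          · simp [hll]
          · intro i h1 h2
            simp only [word_def, List.getElem_map, List.getElem_range, hx]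
            have : (-(M:ℤ) - (R * t : ℕ) + i + M + (R * t : ℕ)).toNat = i := by omega
            rw [this, List.getD_eq_getElem?_getD, List.getElem?_eq_getElem h1]; rfl
        have hxz : ∀ i ∈ Set.Icc (-M0 : ℤ) M0, x i = z i := by
          intro i hi
          simp only [Set.mem_Icc] at hi
          obtain ⟨k, hk⟩ : ∃ k : ℕ, i = -M + k := ⟨(i + M).toNat, by omega⟩
          have e : (i + M + (R * t : ℕ)).toNat = a.length + k := by omega
          simp only [hx, e, hl]
          rw [List.getD_eq_getElem?_getD, List.append_assoc, List.getElem?_append_right (by omega),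
            List.getElem?_append_left (by simp; omega)]
          simp only [word_def, List.getElem?_map, Nat.add_sub_cancel_left]
          rw [List.getElem?_range (by omega), hk]; rfl
        have hxG := interior_subset (hM0 x hxz) t hT
        obtain ⟨i, hi, hw⟩ := Set.mem_iUnion₂.1 hxG
        simp only [Finset.mem_Icc] at hi
        rw [hlx, FF_iterate hrule, occ_word]
        refine ⟨(i + M).toNat, by omega, ?_⟩
        have e : -(M:ℤ) - (R * t : ℕ) + (R * t : ℕ) + (i + M).toNat = i := by omega
        rw [e]; exact hw
      · left; exact hcond
    · rintro ⟨⟨v, T⟩, hvT⟩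
      by_contra hs
      set U : Set (ℤ → Fin 2) := ⋃ i ∈ Finset.range (v.length + 1), {y | word y i s.length = s} with hU
      have hUc : IsClopen U := isClopen_biUnion_finset fun i _ => isClopen_word i s s.length
      have hres := gen_lemma f Uᶜ hUc.compl.isOpen (by
        rw [hgen]
        intro y hy hyU
        obtain ⟨i, hi, hw⟩ := Set.mem_iUnion₂.1 hyU
        exact hs ⟨y, hy, i, hw⟩)
      obtain ⟨x, hxv, hx⟩ := (dense_of_mem_residual hres).inter_open_nonempty _
        (isClopen_word 0 v v.length).isOpen ⟨fun i => v.getD i.toNat 0, by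
          apply List.ext_getElem
          · simp
          · intro i h1 h2
            simp only [word_def, List.getElem_map, List.getElem_range]
            have : ((0:ℤ) + i).toNat = i := by omega
            rw [this, List.getD_eq_getElem?_getD, List.getElem?_eq_getElem h2]; rfl⟩
      obtain ⟨T', hT'⟩ := Filter.eventually_atTop.1 hx
      set t := max T T' with ht
      have hxt := hT' t (le_max_right _ _)
      have hocc := hvT (t, word x (-(R * t : ℕ)) (R * t), word x v.length (R * t))
      dsimp only at hocc
      rcases hocc with hocc | hocc
      · exact hocc ⟨le_max_left _ _, by simp, by simp⟩
      · have hcat : word x (-(R * t : ℕ)) (R * t) ++ v ++ word x v.length (R * t)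
            = word x (-(R * t : ℕ)) (v.length + 2 * (R * t)) := by
          have hv : v = word x 0 v.length := (Eq.symm hxv)
          have app : ∀ (a : ℤ) (m n : ℕ), word x a m ++ word x (a + m) n = word x a (m + n) := by
            intro a m n
            rw [word_def, word_def, word_def, List.range_add, List.map_append, List.map_map]
            congr 1
            apply List.map_congr_left
            intro k _
            simp only [Function.comp]
            congr 1; push_cast; ring
          have e1 := app (-(R * t : ℕ)) (R * t) v.length
          have e2 := app (-(R * t : ℕ)) (R * t + v.length) (R * t)
          have z1 : (-((R * t : ℕ):ℤ)) + (R * t : ℕ) = 0 := by ring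
          have z2 : (-((R * t : ℕ):ℤ)) + (R * t + v.length : ℕ) = v.length := by push_cast; ring
          rw [z1] at e1
          rw [z2] at e2
          conv_lhs => rw [hv]
          rw [word_length, e1, e2]
          congr 1; ring
        rw [hcat, FF_iterate hrule, occ_word] at hocc
        obtain ⟨i, hi, hw⟩ := hocc
        apply hxt
        refine Set.mem_iUnion₂.2 ⟨i, by simp; omega, ?_⟩
        have z1 : (-((R * t : ℕ):ℤ)) + (R * t : ℕ) + i = i := by ring
        rw [z1] at hw
        exact hw

/-- if a Sturmian shift (a subshift with exactly `n + 1` words of length `n`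
for every `n`) is the generic limit set of some CA, then its language is `Δ⁰₂`. -/
theorem stmt14 (X : Set (ℤ → Fin 2)) (hXc : IsClosed X) (hXs : shift '' X = X)
    (hSturm : ∀ n : ℕ, {w ∈ lang X | w.length = n}.ncard = n + 1)
    (hgen : ∃ f : (ℤ → Fin 2) → (ℤ → Fin 2), IsCA f ∧ genLimitSet f = X) :
    SigmaLang 2 (lang X) ∧ PiLang 2 (lang X) := by
  have hS := sturm_of X hXc hXs hSturm
  obtain ⟨f, hf, hfX⟩ := hgen
  have key : IsS2 (lang X) := by
    by_cases h2 : ∀ x ∈ X, LEP x → Per x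
    · refine isS2_min hXc hf hfX ?_
      intro s hs y hy
      obtain ⟨a, ha⟩ := minimal_of hS h2 s.length _ ((mem_lang_iff s).1 hs) y hy
      exact ⟨a, word_eq_of_win ha⟩
    · push Not at h2
      obtain ⟨x, hx, hl, hp⟩ := h2
      have h3 := isS2_of_ep x hl (rep_of hS x hx hl hp)
      have h4 : lang X = {s | ∃ a : ℤ, word x a s.length = s} := by
        ext s
        constructor
        · intro hs
          by_contra hcon
          apply hp
          refine per_of_omit hS s.length _ ((mem_lang_iff s).1 hs) x hx ?_
          intro a ha
          exact hcon ⟨a, word_eq_of_win ha⟩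
        · rintro ⟨a, ha⟩
          exact ⟨x, hx, a, ha⟩
      rw [h4]; exact h3
  exact ⟨key.sigma, (key.compl hSturm).sigma⟩

end Gls
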